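/- arXiv:2305.07757 — 2 statements merged into one kernel-verified Lean document; each statement's English description precedes it below -/
import Mathlib

section
/- Let Q(z,z̄) = Σ_{α,β} c_{αβ} z^α z̄^β be a real-valued polynomial function on ℂⁿ (so c_{αβ} = conj(c_{βα})), homogeneous of total degree d ≥ 2 in (z,z̄), with no pluriharmonic terms (c_{αβ} = 0 whenever α = 0 or β = 0), and suppose the model hypersurface M_Q = {(z,w) ∈ ℂⁿ×ℂ : Im w = Q(z,z̄)} is holomorphically nondegenerate. Let λ₁,…,λₙ ∈ ℂ and J₁ ⊆ {1,…,n−1} satisfy λ_{j+1} = λ_j for every j ∈ J₁, define X = Σ_j λ_j z_j ∂/∂z_j and Z = Σ_{j∈J₁} z_j ∂/∂z_{j+1} acting on Q through holomorphic partial derivatives, and set W = X + Z. If W(Q) = Q identically, then every λ_j is real and J₁ = ∅ (i.e. Z = 0). -/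
open Complex

noncomputable section

/-- `QEval c z = Σ_{α,β} c_{αβ} z^α z̄^β`, the real-valued polynomial with
coefficient family `c`. -/
def QEval {n : ℕ} (c : ((Fin n →₀ ℕ) × (Fin n →₀ ℕ)) →₀ ℂ) (z : Fin n → ℂ) : ℂ :=
  c.sum fun p a => a * (∏ j, z j ^ p.1 j) * ∏ j, (starRingEnd ℂ) (z j) ^ p.2 j

/-- The holomorphic partial derivative `∂Q/∂z_k` of `QEval c`. -/
def QDeriv {n : ℕ} (c : ((Fin n →₀ ℕ) × (Fin n →₀ ℕ)) →₀ ℂ) (k : Fin n) (z : Fin n → ℂ) : ℂ :=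
  c.sum fun p a =>
    a * (p.1 k : ℂ) * (∏ j, z j ^ (((p.1 - Finsupp.single k 1) : Fin n →₀ ℕ) j)) *
      ∏ j, (starRingEnd ℂ) (z j) ^ p.2 j

/-- Holomorphic nondegeneracy of `M_Q = {Im w = Q(z,z̄)}`: the only polynomial
vector field `Σ F_j ∂/∂z_j + G ∂/∂w` tangent to `M_Q` in the strong (holomorphic)
sense is zero. -/
def HND {n : ℕ} (c : ((Fin n →₀ ℕ) × (Fin n →₀ ℕ)) →₀ ℂ) : Prop :=
  ∀ (F : Fin n → MvPolynomial (Fin (n + 1)) ℂ) (G : MvPolynomial (Fin (n + 1)) ℂ),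
    (∀ (z : Fin n → ℂ) (u : ℝ),
      MvPolynomial.eval (Fin.snoc z ((u : ℂ) + Complex.I * QEval c z)) G / (2 * Complex.I) -
        ∑ j, MvPolynomial.eval (Fin.snoc z ((u : ℂ) + Complex.I * QEval c z)) (F j) * QDeriv c j z
          = 0) →
    (∀ j, F j = 0) ∧ G = 0

/-! Write `W = X + Z`. On coefficients `X` is diagonal, multiplying that of `z^α z̄^β` by the weight
`Σ λ_j α_j`, while `Z` sends each monomial to monomials of the same weight and smaller height
`Σ j α_j`. At a monomial of maximal height among those of weight `≠ 1`, the equation `W(Q) = Q`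
would fail; hence `Q` is weighted homogeneous, `X(Q) = Q` and `Z(Q) = 0`. Taking imaginary parts of
the weights, `Σ (Im λ_j) z_j ∂/∂z_j` annihilates `Q` as well, and nondegeneracy forces both
annihilating fields to vanish. -/

section LinearVectorFields

open MvPolynomial

variable {σ R : Type*} [CommSemiring R] {φ : MvPolynomial σ R}

lemma isWeightedHomogeneous_addMonoidHom_comp {M N : Type*} [AddCommMonoid M] [AddCommMonoid N]
    (f : M →+ N) {w : σ → M} {m : M} (hφ : IsWeightedHomogeneous w φ m) :
    IsWeightedHomogeneous (f ∘ w) φ (f m) := by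
  intro d hd
  rw [← hφ hd, Finsupp.weight_apply, Finsupp.weight_apply, map_finsuppSum]
  simp only [Function.comp_apply, map_nsmul]

lemma exists_mem_support_of_coeff_X_mul_pderiv_ne_zero {j k : σ} {m : σ →₀ ℕ}
    (h : coeff m (X j * pderiv k φ) ≠ 0) :
    ∃ m' ∈ φ.support, m' + Finsupp.single j 1 = m + Finsupp.single k 1 := by
  classical
  rw [coeff_X_mul', coeff_pderiv, ite_ne_right_iff] at h
  obtain ⟨hj, hne⟩ := h
  have hle : Finsupp.single j 1 ≤ m :=
    Finsupp.single_le_iff.2 (Nat.one_le_iff_ne_zero.2 (Finsupp.mem_support_iff.1 hj))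
  exact ⟨_, mem_support_iff.2 (left_ne_zero_of_mul hne),
    by rw [add_right_comm, tsub_add_cancel_of_le hle]⟩

lemma coeff_X_mul_pderiv_self (i : σ) (m : σ →₀ ℕ) :
    coeff m (X i * pderiv i φ) = m i * coeff m φ := by
  classical
  induction φ using MvPolynomial.induction_on' with
  | monomial d a =>
    rw [X_mul_pderiv_monomial, coeff_smul, nsmul_eq_mul, coeff_monomial]
    split_ifs with h <;> simp [h]
  | add p q hp hq => rw [map_add, mul_add, coeff_add, hp, hq, coeff_add, mul_add]

lemma coeff_sum_smul_X_mul_pderiv [Fintype σ] (w : σ → R) (m : σ →₀ ℕ) :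
    coeff m (∑ i, w i • (X i * pderiv i φ)) = Finsupp.weight w m * coeff m φ := by
  simp only [coeff_sum, coeff_smul, coeff_X_mul_pderiv_self, Finsupp.weight_eq_sum, Finset.sum_mul,
    smul_eq_mul, nsmul_eq_mul]
  exact Finset.sum_congr rfl fun i _ => by ring

variable [Fintype σ] [IsCancelMulZero R] {w : σ → R} {r : R}

lemma isWeightedHomogeneous_iff_sum_smul_X_mul_pderiv :
    IsWeightedHomogeneous w φ r ↔ ∑ i, w i • (X i * pderiv i φ) = r • φ := by
  simp only [MvPolynomial.ext_iff, coeff_sum_smul_X_mul_pderiv, coeff_smul, smul_eq_mul,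
    mul_eq_mul_right_iff, IsWeightedHomogeneous, or_iff_not_imp_right, ne_eq]

theorem isWeightedHomogeneous_of_diagonal_add_shift [IsCancelAdd R] {ι : Type*} {s : Finset ι}
    {f g : ι → σ} (height : σ → ℕ) (hlt : ∀ i ∈ s, height (f i) < height (g i))
    (hw : ∀ i ∈ s, w (f i) = w (g i))
    (hφ : ∑ i, w i • (X i * pderiv i φ) + ∑ i ∈ s, X (f i) * pderiv (g i) φ = r • φ) :
    IsWeightedHomogeneous w φ r := by
  classical
  by_contra hbad
  have hne : (φ.support.filter fun m => Finsupp.weight w m ≠ r).Nonempty := by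
    simpa [IsWeightedHomogeneous, Finset.Nonempty] using hbad
  obtain ⟨m, hm, hmax⟩ := Finset.exists_max_image _ (Finsupp.weight height) hne
  obtain ⟨hmφ, hmr⟩ := Finset.mem_filter.1 hm
  have hshift : ∀ i ∈ s, coeff m (X (f i) * pderiv (g i) φ) = 0 := by
    intro i hi
    by_contra hcoeff
    obtain ⟨m', hm'φ, hm'⟩ := exists_mem_support_of_coeff_X_mul_pderiv_ne_zero hcoeff
    have hweight := congrArg (Finsupp.weight w) hm'
    have hheight := congrArg (Finsupp.weight height) hm'
    simp only [map_add, Finsupp.weight_single, one_smul, hw i hi, add_left_inj] at hweight hheight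
    have := hmax m' (Finset.mem_filter.2 ⟨hm'φ, hweight ▸ hmr⟩)
    have := hlt i hi
    omega
  have hcoeff := congrArg (coeff m) hφ
  rw [coeff_add, coeff_sum_smul_X_mul_pderiv, coeff_sum, Finset.sum_eq_zero hshift, add_zero,
    coeff_smul, smul_eq_mul] at hcoeff
  exact hmr (mul_right_cancel₀ (mem_support_iff.1 hmφ) hcoeff)

end LinearVectorFields

section Polarization

open MvPolynomial

variable {σ : Type*}

lemma eq_zero_of_eval_ofReal_eq_zero {P : MvPolynomial σ ℂ}
    (h : ∀ x : σ → ℝ, eval (fun i => (x i : ℂ)) P = 0) : P = 0 := by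
  refine funext_set (fun _ => Set.range ((↑) : ℝ → ℂ))
    (fun _ => Set.infinite_range_of_injective ofReal_injective) fun z hz => ?_
  choose x hx using fun i => hz i (Set.mem_univ i)
  rw [← _root_.funext hx, h, map_zero]

/-- A polynomial in the independent variables `(z, z̄)`, rewritten in the real coordinates `(x, y)`
with `z = x + iy` and `z̄ = x - iy`. -/
def inRealCoordinates : MvPolynomial (σ ⊕ σ) ℂ →ₐ[ℂ] MvPolynomial (σ ⊕ σ) ℂ :=
  bind₁ (Sum.elim (fun j => X (.inl j) + C I * X (.inr j)) fun j => X (.inl j) - C I * X (.inr j))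

lemma eval_inRealCoordinates (x y : σ → ℂ) (P : MvPolynomial (σ ⊕ σ) ℂ) :
    eval (Sum.elim x y) (inRealCoordinates P) = eval (Sum.elim (x + I • y) (x - I • y)) P := by
  rw [← coe_aeval_eq_eval, ← coe_aeval_eq_eval, RingHom.coe_coe, RingHom.coe_coe,
    inRealCoordinates, aeval_bind₁]
  congr 2
  ext (j | j) <;> simp

lemma eq_zero_of_eval_conj_eq_zero {P : MvPolynomial (σ ⊕ σ) ℂ}
    (h : ∀ z : σ → ℂ, eval (Sum.elim z (star z)) P = 0) : P = 0 := by
  have hreal : inRealCoordinates P = 0 := eq_zero_of_eval_ofReal_eq_zero fun t => by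
    have hz := h ((fun j => (t (.inl j) : ℂ)) + I • fun j => (t (.inr j) : ℂ))
    convert hz using 1
    rw [← Sum.elim_comp_inl_inr fun i => (t i : ℂ), eval_inRealCoordinates]
    congr 2
    ext (j | j) <;> simp [sub_eq_add_neg]
  refine MvPolynomial.funext fun v => ?_
  have hv := eval_inRealCoordinates (fun j => (v (.inl j) + v (.inr j)) / 2)
    (fun j => (v (.inl j) - v (.inr j)) / (2 * I)) P
  rw [hreal, map_zero] at hv
  rw [map_zero, hv]
  congr 2
  ext (j | j) <;>
    simp only [Sum.elim_inl, Sum.elim_inr, Pi.add_apply, Pi.sub_apply, Pi.smul_apply, smul_eq_mul]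
  all_goals
    field_simp
    ring

variable {n : ℕ}

/-- The polynomial `Σ c_{αβ} z^α z̄^β` in `2n` independent variables: the left summand indexes the
`z_j`, the right one the `z̄_j`. -/
def polarization (c : ((Fin n →₀ ℕ) × (Fin n →₀ ℕ)) →₀ ℂ) : MvPolynomial (Fin n ⊕ Fin n) ℂ :=
  c.sum fun p a => monomial (Finsupp.sumElim p.1 p.2) a

lemma eval_polarization (c : ((Fin n →₀ ℕ) × (Fin n →₀ ℕ)) →₀ ℂ) (z : Fin n → ℂ) :
    eval (Sum.elim z (star z)) (polarization c) = QEval c z := by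
  rw [polarization, QEval, map_finsuppSum]
  refine Finsupp.sum_congr fun p _ => ?_
  rw [eval_monomial, Finsupp.prod_fintype _ _ (by simp), Fintype.prod_sum_type, ← mul_assoc]
  rfl

lemma eval_pderiv_inl_polarization (c : ((Fin n →₀ ℕ) × (Fin n →₀ ℕ)) →₀ ℂ) (k : Fin n)
    (z : Fin n → ℂ) :
    eval (Sum.elim z (star z)) (pderiv (.inl k) (polarization c)) = QDeriv c k z := by
  rw [polarization, QDeriv, map_finsuppSum, map_finsuppSum]
  refine Finsupp.sum_congr fun p _ => ?_
  rw [pderiv_monomial, eval_monomial, Finsupp.prod_fintype _ _ (by simp), Fintype.prod_sum_type,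
    ← mul_assoc]
  simp [Finsupp.single_apply]

lemma eval_sum_smul_X_mul_pderiv_polarization (c : ((Fin n →₀ ℕ) × (Fin n →₀ ℕ)) →₀ ℂ)
    (μ : Fin n → ℂ) (z : Fin n → ℂ) :
    eval (Sum.elim z (star z))
        (∑ i, (Sum.elim μ 0 : Fin n ⊕ Fin n → ℂ) i • (X i * pderiv i (polarization c))) =
      ∑ j, μ j * z j * QDeriv c j z := by
  simp [eval_pderiv_inl_polarization, smul_eval, mul_assoc]

lemma eval_sum_X_mul_pderiv_polarization (c : ((Fin n →₀ ℕ) × (Fin n →₀ ℕ)) →₀ ℂ)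
    (J : Finset (Fin n)) (s : Fin n → Fin n) (z : Fin n → ℂ) :
    eval (Sum.elim z (star z)) (∑ j ∈ J, X (.inl j) * pderiv (.inl (s j)) (polarization c)) =
      ∑ j ∈ J, z j * QDeriv c (s j) z := by
  simp [eval_pderiv_inl_polarization]

lemma sum_smul_X_mul_pderiv_add_eq_smul_polarization
    {c : ((Fin n →₀ ℕ) × (Fin n →₀ ℕ)) →₀ ℂ} {μ : Fin n → ℂ} {J : Finset (Fin n)}
    {s : Fin n → Fin n} {r : ℂ}
    (h : ∀ z : Fin n → ℂ,
      (∑ j, μ j * z j * QDeriv c j z) + (∑ j ∈ J, z j * QDeriv c (s j) z) = r * QEval c z) :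
    ∑ i, (Sum.elim μ 0 : Fin n ⊕ Fin n → ℂ) i • (X i * pderiv i (polarization c)) +
        ∑ j ∈ J, X (.inl j) * pderiv (.inl (s j)) (polarization c) =
      r • polarization c := by
  refine sub_eq_zero.1 (eq_zero_of_eval_conj_eq_zero fun z => ?_)
  rw [map_sub, map_add, eval_sum_smul_X_mul_pderiv_polarization,
    eval_sum_X_mul_pderiv_polarization, smul_eval, eval_polarization, h, sub_self]

end Polarization

section Nondegeneracy

open MvPolynomial

variable {n : ℕ} {c : ((Fin n →₀ ℕ) × (Fin n →₀ ℕ)) →₀ ℂ}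

lemma HND.eq_zero_of_sum_eval_mul_QDeriv_eq_zero (hnd : HND c) {F : Fin n → MvPolynomial (Fin n) ℂ}
    (h : ∀ z, ∑ j, eval z (F j) * QDeriv c j z = 0) : F = 0 := by
  have hF := (hnd (fun j => rename Fin.castSucc (F j)) 0 fun z u => by
    simpa [eval_rename, Function.comp_def] using h z).1
  exact _root_.funext fun j =>
    rename_injective _ (Fin.castSucc_injective n) ((hF j).trans (map_zero _).symm)

lemma HND.eq_zero_of_isWeightedHomogeneous_zero (hnd : HND c) {μ : Fin n → ℂ}
    (h : IsWeightedHomogeneous (Sum.elim μ 0) (polarization c) 0) : μ = 0 := by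
  have hF : (fun j => C (μ j) * X j) = (0 : Fin n → MvPolynomial (Fin n) ℂ) :=
    hnd.eq_zero_of_sum_eval_mul_QDeriv_eq_zero fun z => by
      have heuler := isWeightedHomogeneous_iff_sum_smul_X_mul_pderiv.1 h
      simpa [← eval_sum_smul_X_mul_pderiv_polarization]
        using congrArg (eval (Sum.elim z (star z))) heuler
  ext j
  simpa using congrFun hF j

lemma HND.eq_empty_of_sum_mul_QDeriv_eq_zero (hnd : HND c) {J : Finset (Fin n)}
    {s : Fin n → Fin n} (h : ∀ z : Fin n → ℂ, ∑ j ∈ J, z j * QDeriv c (s j) z = 0) : J = ∅ := by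
  have hF : (fun k => ∑ j ∈ J with s j = k, X j) = (0 : Fin n → MvPolynomial (Fin n) ℂ) :=
    hnd.eq_zero_of_sum_eval_mul_QDeriv_eq_zero fun z => by
      rw [← h z, ← Finset.sum_fiberwise J s]
      refine Finset.sum_congr rfl fun k _ => ?_
      rw [map_sum, Finset.sum_mul]
      refine Finset.sum_congr rfl fun j hj => ?_
      rw [eval_X, (Finset.mem_filter.1 hj).2]
  refine Finset.eq_empty_of_forall_notMem fun j hj => ?_
  have hcoeff := congrArg (coeff (Finsupp.single j 1)) (congrFun hF (s j))
  simp [coeff_sum, coeff_X, Finsupp.single_left_inj, hj] at hcoeff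

theorem stmt1_general (hnd : HND c) {lam : Fin n → ℂ} {J : Finset (Fin n)} {s : Fin n → Fin n}
    (hs : ∀ j ∈ J, j < s j) (hlam : ∀ j ∈ J, lam (s j) = lam j) {r : ℝ}
    (hWQ : ∀ z : Fin n → ℂ,
      (∑ j, lam j * z j * QDeriv c j z) + (∑ j ∈ J, z j * QDeriv c (s j) z) = r * QEval c z) :
    (∀ j, (lam j).im = 0) ∧ J = ∅ := by
  have hfield := sum_smul_X_mul_pderiv_add_eq_smul_polarization hWQ
  have hweight : IsWeightedHomogeneous (Sum.elim lam 0) (polarization c) (r : ℂ) :=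
    isWeightedHomogeneous_of_diagonal_add_shift (f := Sum.inl) (g := Sum.inl ∘ s)
      (Sum.elim Fin.val 0) hs (fun j hj => (hlam j hj).symm) hfield
  constructor
  · have him : IsWeightedHomogeneous (Sum.elim (fun j => ((lam j).im : ℂ)) 0)
        (polarization c) 0 := by
      convert isWeightedHomogeneous_addMonoidHom_comp
        (ofRealHom.toAddMonoidHom.comp imAddGroupHom) hweight using 1
      · ext (_ | _) <;> simp
      · simp
    intro j
    simpa using congrFun (hnd.eq_zero_of_isWeightedHomogeneous_zero him) j
  · have hshift := left_eq_add.1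
      ((isWeightedHomogeneous_iff_sum_smul_X_mul_pderiv.1 hweight).trans hfield.symm)
    refine hnd.eq_empty_of_sum_mul_QDeriv_eq_zero (s := s) fun z => ?_
    rw [← eval_sum_X_mul_pderiv_polarization, hshift, map_zero]

end Nondegeneracy

/-- If moreover `M_Q` is holomorphically nondegenerate and
`W(Q) = Q`, then all eigenvalues `λ_j` are real and the nilpotent part vanishes
(`J₁ = ∅`). -/
theorem stmt1 (n : ℕ) [NeZero n] (d : ℕ) (hd : 2 ≤ d)
    (c : ((Fin n →₀ ℕ) × (Fin n →₀ ℕ)) →₀ ℂ)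
    (hreal : ∀ α β : Fin n →₀ ℕ, c (α, β) = (starRingEnd ℂ) (c (β, α)))
    (hhom : ∀ p ∈ c.support, (p.1.sum fun _ e => e) + (p.2.sum fun _ e => e) = d)
    (hnoplh : ∀ p ∈ c.support, p.1 ≠ 0 ∧ p.2 ≠ 0)
    (hnd : HND c)
    (lam : Fin n → ℂ) (J₁ : Finset (Fin n))
    (hJ : ∀ j ∈ J₁, (j : ℕ) + 1 < n)
    (hJordan : ∀ j ∈ J₁, lam (j + 1) = lam j)
    (hWQ : ∀ z : Fin n → ℂ,
        (∑ j, lam j * z j * QDeriv c j z) + (∑ j ∈ J₁, z j * QDeriv c (j + 1) z)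
          = QEval c z) :
    (∀ j, (lam j).im = 0) ∧ J₁ = ∅ :=
  stmt1_general hnd (r := 1) (fun j hj => Fin.lt_add_one_of_succ_lt (hJ j hj)) hJordan
    (by simpa using hWQ)
end
end

section
/- Let P = c_P z₁^{α₁}z₂^{α₂}z₃^{α₃}, Q = c_Q z₁^{β₁}z₂^{β₂}z₃^{β₃}, R = c_R z₁^{γ₁}z₂^{γ₂}z₃^{γ₃} be monomials with nonzero coefficients c_P, c_Q, c_R ∈ ℂ, with deg P + deg Q = 2·deg R and with det[[α₁,β₁,γ₁],[α₂,β₂,γ₂],[α₃,β₃,γ₃]] ≠ 0 (holomorphic nondegeneracy). Let X = Σ_{j,k=1}^3 a_{jk} z_k ∂/∂z_j (a_{jk} ∈ ℂ) be a rotation of M. Then D := Σ_{j=1}^3 a_{jj} z_j ∂/∂z_j is a rotation, N := Σ_{j≠k} a_{jk} z_k ∂/∂z_j is a rotation, and either the matrix of N is nilpotent, or there exists a subset J₁ of the off-diagonal index set J = {(j,k) : j ≠ k, j,k ∈ {1,2,3}} such that N₁ := Σ_{(j,k)∈J₁} a_{jk} z_k ∂/∂z_j and N₂ := Σ_{(j,k)∈J∖J₁}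 a_{jk} z_k ∂/∂z_j are both nilpotent rotations (and N = N₁ + N₂). -/
/-!
Give `z_i` and `conj z_i` the integer weight `h_i`. Nondegeneracy of the exponent matrix allows `h`
to be chosen so that `P`, `Q`, `R` have weights `-d`, `d`, `0` for some `d ≠ 0`; then `Φ` has weight
zero, `z_k ∂/∂z_j` has weight `h_k - h_j`, and every weight component of a rotation is again a
rotation, since on the torus distinct bimonomials in `z` and `conj z` are distinct characters and
hence linearly independent. Because the weights `-d`, `d`, `0` are distinct, the terms coming from
an off-diagonal field of weight zero cancel neither with the other terms nor with their conjugates,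
so such a field cannot occur. Thus the component of weight zero is the diagonal part, while the
components of positive and of negative weight are strictly triangular with respect to `h`, hence
nilpotent.
-/

open MvPolynomial Complex

noncomputable section

/-- `Φ(z) = P(z)·conj(Q(z)) + Q(z)·conj(P(z)) + R(z)·conj(R(z))`, so that the model
hypersurface is `M = {(z,w) : Im w = Φ(z)}`. -/
def Phi (P Q R : MvPolynomial (Fin 3) ℂ) (z : Fin 3 → ℂ) : ℂ :=
  eval z P * (starRingEnd ℂ) (eval z Q) + eval z Q * (starRingEnd ℂ) (eval z P) +
    eval z R * (starRingEnd ℂ) (eval z R)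

/-- `Φ_j(z) = (∂P/∂z_j)(z)·conj(Q(z)) + (∂Q/∂z_j)(z)·conj(P(z)) + (∂R/∂z_j)(z)·conj(R(z))`. -/
def PhiD (P Q R : MvPolynomial (Fin 3) ℂ) (j : Fin 3) (z : Fin 3 → ℂ) : ℂ :=
  eval z (pderiv j P) * (starRingEnd ℂ) (eval z Q) +
    eval z (pderiv j Q) * (starRingEnd ℂ) (eval z P) +
    eval z (pderiv j R) * (starRingEnd ℂ) (eval z R)

/-- The monomial `c·z₁^{e₁} z₂^{e₂} z₃^{e₃}`. -/
def mon (c : ℂ) (e : Fin 3 → ℕ) : MvPolynomial (Fin 3) ℂ :=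
  C c * X 0 ^ e 0 * X 1 ^ e 1 * X 2 ^ e 2

/-- Total degree of the exponent vector `e`. -/
def degE (e : Fin 3 → ℕ) : ℕ := e 0 + e 1 + e 2

/-- The determinant of the 3×3 matrix whose columns are the exponent vectors
`a`, `b`, `g` of the three monomials. -/
def edet (a b g : Fin 3 → ℕ) : ℤ :=
  Matrix.det !![(a 0 : ℤ), (b 0 : ℤ), (g 0 : ℤ);
                (a 1 : ℤ), (b 1 : ℤ), (g 1 : ℤ);
                (a 2 : ℤ), (b 2 : ℤ), (g 2 : ℤ)]

/-- The linear field `Σ_{j,k} A_{jk} z_k ∂/∂z_j` is a rotation of `M`. -/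
def IsRotation (P Q R : MvPolynomial (Fin 3) ℂ) (A : Matrix (Fin 3) (Fin 3) ℂ) : Prop :=
  ∀ z : Fin 3 → ℂ, (∑ j, (∑ k, A j k * z k) * PhiD P Q R j z).re = 0

section Nilpotent

variable {n α S : Type*} [Fintype n] [DecidableEq n] [Preorder α] [Semiring S]

lemma le_card_filter_lt_of_pow_apply_ne_zero [DecidableLT α] {B : Matrix n n S} {h : n → α}
    (hB : ∀ j k, B j k ≠ 0 → h j < h k) {N : ℕ} {i k : n} (hik : (B ^ N) i k ≠ 0) :
    N ≤ (Finset.univ.filter fun x => h x < h k).card := by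
  induction N generalizing k with
  | zero => exact Nat.zero_le _
  | succ N ih =>
    rw [pow_succ, Matrix.mul_apply] at hik
    obtain ⟨j, -, hj⟩ := Finset.exists_ne_zero_of_sum_ne_zero hik
    have hjk : h j < h k := hB j k (right_ne_zero_of_mul hj)
    refine Nat.succ_le_of_lt ((ih (left_ne_zero_of_mul hj)).trans_lt (Finset.card_lt_card ?_))
    refine (Finset.ssubset_iff_of_subset ?_).mpr ⟨j, by simpa using hjk, by simp⟩
    exact Finset.monotone_filter_right _ fun x _ hx => lt_trans hx hjk

lemma isNilpotent_of_ne_zero_imp_lt {B : Matrix n n S} {h : n → α}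
    (hB : ∀ j k, B j k ≠ 0 → h j < h k) : IsNilpotent B := by
  classical
  refine ⟨Fintype.card n, ?_⟩
  ext i k
  by_contra hik
  exact (le_card_filter_lt_of_pow_apply_ne_zero hB hik).not_gt
    (Finset.card_lt_univ_of_notMem (x := k) (by simp))

end Nilpotent

section Bimonomial

variable {ι : Type*} [Fintype ι]

/-- The character `z ↦ ∏ᵢ zᵢ^{μᵢ} · conj(zᵢ)^{νᵢ}` of the complex torus, for `κ = (μ, ν)`. On the
torus, every polynomial in `z` and `conj z` is a combination of these characters. -/
def bimonomial (κ : (ι → ℤ) × (ι → ℤ)) : (ι → ℂˣ) →* ℂ where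
  toFun z := ∏ i, (z i : ℂ) ^ κ.1 i * (starRingEnd ℂ) (z i : ℂ) ^ κ.2 i
  map_one' := by simp
  map_mul' z w := by
    simp only [Pi.mul_apply, Units.val_mul, map_mul, mul_zpow, mul_mul_mul_comm,
      Finset.prod_mul_distrib]

lemma bimonomial_apply (κ : (ι → ℤ) × (ι → ℤ)) (z : ι → ℂˣ) :
    bimonomial κ z = ∏ i, (z i : ℂ) ^ κ.1 i * (starRingEnd ℂ) (z i : ℂ) ^ κ.2 i := rfl

lemma bimonomial_add (κ κ' : (ι → ℤ) × (ι → ℤ)) (z : ι → ℂˣ) :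
    bimonomial (κ + κ') z = bimonomial κ z * bimonomial κ' z := by
  simp only [bimonomial_apply, ← Finset.prod_mul_distrib]
  refine Finset.prod_congr rfl fun i _ => ?_
  have hconj : (starRingEnd ℂ) (z i : ℂ) ≠ 0 := by simp
  rw [Prod.fst_add, Prod.snd_add, Pi.add_apply, Pi.add_apply, zpow_add₀ (z i).ne_zero,
    zpow_add₀ hconj, mul_mul_mul_comm]

lemma conj_bimonomial (κ : (ι → ℤ) × (ι → ℤ)) (z : ι → ℂˣ) :
    (starRingEnd ℂ) (bimonomial κ z) = bimonomial κ.swap z := by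
  simp [bimonomial_apply, mul_comm]

lemma bimonomial_natCast (e e' : ι → ℕ) (z : ι → ℂˣ) :
    bimonomial (Nat.cast ∘ e, Nat.cast ∘ e') z =
      (∏ i, (z i : ℂ) ^ e i) * (starRingEnd ℂ) (∏ i, (z i : ℂ) ^ e' i) := by
  simp [bimonomial_apply, Finset.prod_mul_distrib]

lemma bimonomial_single_zero [DecidableEq ι] (k : ι) (z : ι → ℂˣ) :
    bimonomial (Pi.single k 1, 0) z = z k := by
  rw [bimonomial_apply, Finset.prod_eq_single k] <;> simp +contextual

lemma bimonomial_mulSingle [DecidableEq ι] (κ : (ι → ℤ) × (ι → ℤ)) (i : ι) (t : ℂˣ) :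
    bimonomial κ (Pi.mulSingle i t) = (t : ℂ) ^ κ.1 i * (starRingEnd ℂ) (t : ℂ) ^ κ.2 i := by
  rw [bimonomial_apply, Finset.prod_eq_single i]
  · simp
  · intro j _ hj
    simp [Pi.mulSingle_eq_of_ne hj]
  · simp

lemma eq_of_forall_zpow_mul_conj_zpow_eq {m n m' n' : ℤ}
    (h : ∀ t : ℂˣ, (t : ℂ) ^ m * (starRingEnd ℂ) (t : ℂ) ^ n =
      (t : ℂ) ^ m' * (starRingEnd ℂ) (t : ℂ) ^ n') : m = m' ∧ n = n' := by
  have h_add : m + n = m' + n' := by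
    have h_two := congrArg norm (h (Units.mk0 2 two_ne_zero))
    simp only [Units.val_mk0, map_ofNat, ← zpow_add₀ (two_ne_zero (α := ℂ)), norm_zpow,
      Complex.norm_ofNat] at h_two
    exact zpow_right_injective₀ two_pos (by norm_num) h_two
  have h_sub : m - n = m' - n' := by
    by_contra hne
    set d : ℤ := (m - n) - (m' - n') with hd
    have hd0 : (d : ℂ) ≠ 0 := by exact_mod_cast sub_ne_zero.mpr hne
    -- On the unit circle the identity reads `t ^ d = 1`, which fails at `t = exp (π * I / d)`.
    set θ : ℂ := Real.pi * I / d with hθ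
    have h_conj : (starRingEnd ℂ) θ = -θ := by simp [hθ, neg_div]
    have h_root := h (Units.mk0 (exp θ) (exp_ne_zero _))
    simp only [Units.val_mk0, ← exp_conj, h_conj, ← exp_int_mul, ← exp_add] at h_root
    have h_exponent : (m * θ + n * -θ) - (m' * θ + n' * -θ) = Real.pi * I :=
      calc (m * θ + n * -θ) - (m' * θ + n' * -θ) = d * θ := by rw [hd]; push_cast; ring
        _ = Real.pi * I := mul_div_cancel₀ _ hd0
    have h_exp := exp_sub (m * θ + n * -θ) (m' * θ + n' * -θ)
    rw [h_root, div_self (exp_ne_zero _), h_exponent, exp_pi_mul_I] at h_exp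
    norm_num at h_exp
  omega

lemma bimonomial_injective :
    Function.Injective (bimonomial : (ι → ℤ) × (ι → ℤ) → ((ι → ℂˣ) →* ℂ)) := by
  classical
  intro κ κ' h
  have h_coord (i : ι) : κ.1 i = κ'.1 i ∧ κ.2 i = κ'.2 i :=
    eq_of_forall_zpow_mul_conj_zpow_eq fun t => by
      simpa only [bimonomial_mulSingle] using DFunLike.congr_fun h (Pi.mulSingle i t)
  exact Prod.ext (funext fun i => (h_coord i).1) (funext fun i => (h_coord i).2)

lemma linearIndependent_bimonomial :
    LinearIndependent ℂ fun κ : (ι → ℤ) × (ι → ℤ) => (bimonomial κ : (ι → ℂˣ) → ℂ) :=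
  (linearIndependent_monoidHom (ι → ℂˣ) ℂ).comp bimonomial bimonomial_injective

lemma forall_re_linearCombination_bimonomial_eq_zero_iff (F : (ι → ℤ) × (ι → ℤ) →₀ ℂ) :
    (∀ z, (Finsupp.linearCombination ℂ (bimonomial · z) F).re = 0) ↔
      ∀ κ, F κ + (starRingEnd ℂ) (F κ.swap) = 0 := by
  let G : (ι → ℤ) × (ι → ℤ) →₀ ℂ :=
    F + (F.mapRange (starRingEnd ℂ) (map_zero _)).mapDomain Prod.swap
  have hG (κ) : G κ = F κ + (starRingEnd ℂ) (F κ.swap) := by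
    have h_swap := Finsupp.mapDomain_apply Prod.swap_injective
      (F.mapRange (starRingEnd ℂ) (map_zero _)) κ.swap
    simpa [G] using h_swap
  have h_conj (z : ι → ℂˣ) : (starRingEnd ℂ) (Finsupp.linearCombination ℂ (bimonomial · z) F) =
      Finsupp.linearCombination ℂ (bimonomial · z)
        ((F.mapRange (starRingEnd ℂ) (map_zero _)).mapDomain Prod.swap) := by
    rw [Finsupp.linearCombination_mapDomain, Finsupp.linearCombination_apply,
      Finsupp.linearCombination_apply, Finsupp.sum_mapRange_index (by simp)]
    simp [Finsupp.sum, conj_bimonomial]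
  have hG_eval (z : ι → ℂˣ) :
      Finsupp.linearCombination ℂ (fun κ => (bimonomial κ : (ι → ℂˣ) → ℂ)) G z =
        ((2 * (Finsupp.linearCombination ℂ (bimonomial · z) F).re : ℝ) : ℂ) := by
    rw [← Complex.add_conj, h_conj, ← map_add]
    simp [Finsupp.linearCombination_apply, Finsupp.sum, G]
  calc (∀ z, (Finsupp.linearCombination ℂ (bimonomial · z) F).re = 0)
      ↔ Finsupp.linearCombination ℂ (fun κ => (bimonomial κ : (ι → ℂˣ) → ℂ)) G = 0 := by
        simp [_root_.funext_iff, hG_eval]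
    _ ↔ G = 0 := map_eq_zero_iff _ linearIndependent_bimonomial
    _ ↔ ∀ κ, F κ + (starRingEnd ℂ) (F κ.swap) = 0 := by simp [Finsupp.ext_iff, hG]

end Bimonomial

section TermExponent

variable {ι T : Type*} [DecidableEq ι]

lemma eq_of_pi_single_sub_single_eq {j k j' k' : ι} (hjk : j ≠ k)
    (heq : (Pi.single k' 1 - Pi.single j' 1 : ι → ℤ) = Pi.single k 1 - Pi.single j 1) :
    j' = j ∧ k' = k := by
  have hj := congrFun heq j
  have hk := congrFun heq k
  simp only [Pi.sub_apply, Pi.single_apply] at hj hk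
  grind

variable (σ : T → T) (e : T → ι →₀ ℕ)

/-- The exponents, in `z` and `conj z`, of the term that `z_k ∂/∂z_j` produces from
`P_τ·conj(P_{σ τ})`, where `P_τ` is a monomial with exponents `e τ`. They are integers because
`j` need not occur in `P_τ`; the term then has coefficient zero. -/
def termExponent (τ : T) (j k : ι) : (ι → ℤ) × (ι → ℤ) :=
  (Nat.cast ∘ e τ + Pi.single k 1 - Pi.single j 1, Nat.cast ∘ e (σ τ))

variable [Fintype ι]

lemma mul_bimonomial_termExponent (τ : T) (j k : ι) (z : ι → ℂˣ) :
    z j * bimonomial (termExponent σ e τ j k) z =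
      z k * bimonomial (Nat.cast ∘ e τ, Nat.cast ∘ e (σ τ)) z := by
  rw [← bimonomial_single_zero j, ← bimonomial_single_zero k, ← bimonomial_add, ← bimonomial_add]
  congr 1
  simp [termExponent, add_comm]

lemma mul_eval_pderiv_monomial_mul_conj (c : T → ℂ) (τ : T) (j k : ι) (z : ι → ℂˣ) :
    z k * (eval (fun i => (z i : ℂ)) (pderiv j (monomial (e τ) (c τ))) *
      (starRingEnd ℂ) (eval (fun i => (z i : ℂ)) (monomial (e (σ τ)) (c (σ τ))))) =
      e τ j * (c τ * (starRingEnd ℂ) (c (σ τ))) * bimonomial (termExponent σ e τ j k) z := by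
  have h_euler := congrArg (eval fun i => (z i : ℂ))
    (X_mul_pderiv_monomial (i := j) (m := e τ) (r := c τ))
  simp only [map_mul, eval_X, nsmul_eq_mul, map_natCast, eval_monomial, Finsupp.prod_pow]
    at h_euler ⊢
  have h_term := mul_bimonomial_termExponent σ e τ j k z
  rw [bimonomial_natCast] at h_term
  refine mul_left_cancel₀ (z j).ne_zero ?_
  linear_combination z k * (starRingEnd ℂ) (c (σ τ)) *
    (starRingEnd ℂ) (∏ i, (z i : ℂ) ^ e (σ τ) i) * h_euler -
    e τ j * (c τ * (starRingEnd ℂ) (c (σ τ))) * h_term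

end TermExponent

section PairedModel

variable {ι T : Type*}

lemma dense_forall_ne_zero : Dense {z : ι → ℂ | ∀ i, z i ≠ 0} := by
  simpa [Set.pi] using dense_pi (Set.univ : Set ι) fun _ _ => dense_compl_singleton (0 : ℂ)

variable [Fintype ι] [Fintype T]

/-- The linear field `Σ_{j,k} A_{jk} z_k ∂/∂z_j` is a rotation of the model hypersurface
`Im w = Σ_τ P_τ(z)·conj(P_{σ τ}(z))`, for an involution `σ`. The models of `IsRotation` are those
in which `σ` exchanges `P` with `Q` and fixes `R`. -/
def IsPairedRotation (σ : T → T) (P : T → MvPolynomial ι ℂ) (A : Matrix ι ι ℂ) : Prop :=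
  ∀ z : ι → ℂ, (∑ j, (∑ k, A j k * z k) *
    ∑ τ, eval z (pderiv j (P τ)) * (starRingEnd ℂ) (eval z (P (σ τ)))).re = 0

lemma isRotation_iff_isPairedRotation (P Q R : MvPolynomial (Fin 3) ℂ)
    (A : Matrix (Fin 3) (Fin 3) ℂ) :
    IsRotation P Q R A ↔ IsPairedRotation (Equiv.swap 0 1) ![P, Q, R] A := by
  have hσ : (Equiv.swap 0 1 : Equiv.Perm (Fin 3)) 2 = 2 := by decide
  simp [IsRotation, IsPairedRotation, PhiD, Fin.sum_univ_three _, hσ]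

lemma mon_eq_monomial (c : ℂ) (e : Fin 3 → ℕ) :
    mon c e = monomial (Finsupp.equivFunOnFinite.symm e) c := by
  rw [monomial_eq, Finsupp.prod_fintype _ _ (by simp)]
  simp [mon, Fin.prod_univ_three, mul_assoc]

lemma isRotation_mon_iff (cP cQ cR : ℂ) (a b g : Fin 3 → ℕ) (A : Matrix (Fin 3) (Fin 3) ℂ) :
    IsRotation (mon cP a) (mon cQ b) (mon cR g) A ↔
      IsPairedRotation (Equiv.swap 0 1) (fun τ => monomial
        (Finsupp.equivFunOnFinite.symm (![a, b, g] τ)) (![cP, cQ, cR] τ)) A := by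
  rw [isRotation_iff_isPairedRotation]
  congr! 1
  funext τ
  fin_cases τ <;> exact mon_eq_monomial _ _

lemma isPairedRotation_iff_forall_units (σ : T → T) (P : T → MvPolynomial ι ℂ)
    (A : Matrix ι ι ℂ) :
    IsPairedRotation σ P A ↔ ∀ z : ι → ℂˣ, (∑ j, (∑ k, A j k * z k) *
      ∑ τ, eval (fun i => (z i : ℂ)) (pderiv j (P τ)) *
        (starRingEnd ℂ) (eval (fun i => (z i : ℂ)) (P (σ τ)))).re = 0 := by
  refine ⟨fun h z => h _, fun h => congrFun (Continuous.ext_on dense_forall_ne_zero ?_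
    continuous_const fun z hz => h fun i => Units.mk0 (z i) (hz i))⟩
  have h_eval (p : MvPolynomial ι ℂ) := MvPolynomial.continuous_eval p
  fun_prop

variable [DecidableEq ι] (σ : T → T) (c : T → ℂ) (e : T → ι →₀ ℕ) (A : Matrix ι ι ℂ)

/-- The expansion of `Σ_{j,k} A_{jk} z_k ∂_j Σ_τ P_τ·conj(P_{σ τ})`, for `P_τ = c_τ z^{e τ}`, as a
combination of bimonomials. -/
def rotationExpansion : (ι → ℤ) × (ι → ℤ) →₀ ℂ :=
  ∑ j, ∑ k, ∑ τ, Finsupp.single (termExponent σ e τ j k)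
    (A j k * (e τ j * (c τ * (starRingEnd ℂ) (c (σ τ)))))

lemma rotationExpansion_apply (κ : (ι → ℤ) × (ι → ℤ)) :
    rotationExpansion σ c e A κ = ∑ j, ∑ k, ∑ τ, if termExponent σ e τ j k = κ then
      A j k * (e τ j * (c τ * (starRingEnd ℂ) (c (σ τ)))) else 0 := by
  simp only [rotationExpansion, Finsupp.finsetSum_apply, Finsupp.single_apply]

lemma linearCombination_rotationExpansion (z : ι → ℂˣ) :
    Finsupp.linearCombination ℂ (bimonomial · z) (rotationExpansion σ c e A) =
      ∑ j, (∑ k, A j k * z k) *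
        ∑ τ, eval (fun i => (z i : ℂ)) (pderiv j (monomial (e τ) (c τ))) *
          (starRingEnd ℂ) (eval (fun i => (z i : ℂ)) (monomial (e (σ τ)) (c (σ τ)))) := by
  simp only [rotationExpansion, map_sum, Finsupp.linearCombination_single, smul_eq_mul,
    Finset.sum_mul_sum, mul_assoc (A _ _), mul_eval_pderiv_monomial_mul_conj]

lemma isPairedRotation_monomial_iff :
    IsPairedRotation σ (fun τ => monomial (e τ) (c τ)) A ↔
      ∀ κ, rotationExpansion σ c e A κ +
        (starRingEnd ℂ) (rotationExpansion σ c e A κ.swap) = 0 := by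
  rw [← forall_re_linearCombination_bimonomial_eq_zero_iff, isPairedRotation_iff_forall_units]
  simp only [linearCombination_rotationExpansion]

end PairedModel

section WeightPart

variable {ι : Type*} {h : ι → ℤ} {A : Matrix ι ι ℂ}

/-- The part of `Σ_{j,k} A_{jk} z_k ∂/∂z_j` consisting of the terms whose weight satisfies `p`, when
`z_i` has weight `h i` and hence `z_k ∂/∂z_j` has weight `h k - h j`. -/
def weightPart (h : ι → ℤ) (p : ℤ → Prop) [DecidablePred p] (A : Matrix ι ι ℂ) : Matrix ι ι ℂ :=
  Matrix.of fun j k => if p (h k - h j) then A j k else 0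

lemma weightPart_pos_add_weightPart_neg :
    weightPart h (0 < ·) A + weightPart h (· < 0) A = weightPart h (· ≠ 0) A := by
  ext j k
  simp only [weightPart, Matrix.add_apply, Matrix.of_apply]
  grind

variable [Fintype ι] [DecidableEq ι]

lemma isNilpotent_weightPart_pos : IsNilpotent (weightPart h (0 < ·) A) :=
  isNilpotent_of_ne_zero_imp_lt (h := h) fun j k hjk => by
    simpa using (ite_ne_right_iff.mp hjk).1

lemma isNilpotent_weightPart_neg : IsNilpotent (weightPart h (· < 0) A) :=
  isNilpotent_of_ne_zero_imp_lt (h := OrderDual.toDual ∘ h) fun j k hjk => by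
    simpa using (ite_ne_right_iff.mp hjk).1

end WeightPart

section Weights

variable {ι T : Type*} [Fintype ι] {σ : T → T} {e : T → ι →₀ ℕ} {h : ι → ℤ}

/-- Weights `h` of the coordinates `z_i` (with `conj z_i` given the same weight) for which
`Σ_τ P_τ·conj(P_{σ τ})` is weighted homogeneous of weight zero, where `P_τ` is a monomial with
exponents `e τ`. -/
def IsBalancedWeight (σ : T → T) (e : T → ι →₀ ℕ) (h : ι → ℤ) : Prop :=
  ∀ τ, h ⬝ᵥ (Nat.cast ∘ e (σ τ)) = -(h ⬝ᵥ (Nat.cast ∘ e τ))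

lemma exists_isBalancedWeight_of_edet_ne_zero {a b g : Fin 3 → ℕ} (hdet : edet a b g ≠ 0) :
    ∃ h : Fin 3 → ℤ,
      IsBalancedWeight (Equiv.swap 0 1)
        (fun τ => Finsupp.equivFunOnFinite.symm (![a, b, g] τ)) h ∧
      Function.Injective fun τ =>
        h ⬝ᵥ (Nat.cast ∘ Finsupp.equivFunOnFinite.symm (![a, b, g] τ)) := by
  let M : Matrix (Fin 3) (Fin 3) ℤ := Matrix.of fun i τ => (![a, b, g] τ i : ℤ)
  have hM_det : edet a b g = M.det := by
    rw [edet]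
    congr 1
    ext i τ
    fin_cases i <;> fin_cases τ <;> rfl
  let v : Fin 3 → ℤ := ![-1, 1, 0]
  have h_weight (τ : Fin 3) :
      Matrix.vecMul v M.adjugate ⬝ᵥ (Nat.cast ∘ Finsupp.equivFunOnFinite.symm (![a, b, g] τ)) =
        edet a b g * v τ := by
    have h_adj : Matrix.vecMul (Matrix.vecMul v M.adjugate) M = M.det • v := by
      rw [Matrix.vecMul_vecMul, Matrix.adjugate_mul, Matrix.vecMul_smul, Matrix.vecMul_one]
    rw [hM_det]
    exact congrFun h_adj τ
  refine ⟨Matrix.vecMul v M.adjugate, fun τ => ?_, fun τ τ' hτ => ?_⟩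
  · have hv_odd : ∀ τ, v (Equiv.swap 0 1 τ) = -v τ := by decide
    rw [h_weight, h_weight, hv_odd, mul_neg]
  · have hv_inj : Function.Injective v := by decide
    simp only [h_weight] at hτ
    exact hv_inj (mul_left_cancel₀ hdet hτ)

lemma exists_apply_ne_zero_of_edet_ne_zero {a b g : Fin 3 → ℕ} (hdet : edet a b g ≠ 0)
    (j : Fin 3) : ∃ τ, ![a, b, g] τ j ≠ 0 := by
  by_contra! h_zero
  refine hdet (Matrix.det_eq_zero_of_row_eq_zero j fun τ => ?_)
  have h_col := h_zero τ
  fin_cases j <;> fin_cases τ <;> simpa using h_col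

variable [DecidableEq ι]

lemma dotProduct_termExponent_fst (τ : T) (j k : ι) :
    h ⬝ᵥ (termExponent σ e τ j k).1 = h ⬝ᵥ (Nat.cast ∘ e τ) + (h k - h j) := by
  simp [termExponent, dotProduct_add, dotProduct_sub, add_sub_assoc]

lemma IsBalancedWeight.dotProduct_termExponent_snd (hh : IsBalancedWeight σ e h) (τ : T)
    (j k : ι) : h ⬝ᵥ (termExponent σ e τ j k).2 = -(h ⬝ᵥ (Nat.cast ∘ e τ)) :=
  hh τ

lemma IsBalancedWeight.dotProduct_termExponent_add (hh : IsBalancedWeight σ e h) (τ : T)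
    (j k : ι) :
    h ⬝ᵥ (termExponent σ e τ j k).1 + h ⬝ᵥ (termExponent σ e τ j k).2 = h k - h j := by
  rw [dotProduct_termExponent_fst, hh.dotProduct_termExponent_snd]
  ring

lemma IsBalancedWeight.eq_of_termExponent_eq (hh : IsBalancedWeight σ e h)
    (h_inj : Function.Injective fun τ => h ⬝ᵥ (Nat.cast ∘ e τ)) {τ τ' : T} {j k j' k' : ι}
    (hjk : j ≠ k) (heq : termExponent σ e τ' j' k' = termExponent σ e τ j k) :
    τ' = τ ∧ j' = j ∧ k' = k := by
  have hτ : τ' = τ := by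
    refine h_inj (neg_injective ?_)
    simp only [← hh.dotProduct_termExponent_snd τ' j' k', heq, hh.dotProduct_termExponent_snd τ]
  subst hτ
  refine ⟨rfl, eq_of_pi_single_sub_single_eq hjk ?_⟩
  simpa [termExponent, add_sub_assoc] using congrArg Prod.fst heq

lemma termExponent_ne_swap (h_inj : Function.Injective fun τ => h ⬝ᵥ (Nat.cast ∘ e τ)) {j k : ι}
    (hjk : j ≠ k) (hhjk : h j = h k) (τ τ' : T) (j' k' : ι) :
    termExponent σ e τ' j' k' ≠ (termExponent σ e τ j k).swap := by
  intro heq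
  have h_snd : (termExponent σ e τ' j' k').2 = (termExponent σ e τ j k).1 := congrArg Prod.snd heq
  have hτ : σ τ' = τ := h_inj <|
    calc h ⬝ᵥ (Nat.cast ∘ e (σ τ')) = h ⬝ᵥ (termExponent σ e τ j k).1 := by rw [← h_snd]; rfl
      _ = h ⬝ᵥ (Nat.cast ∘ e τ) := by rw [dotProduct_termExponent_fst, hhjk, sub_self, add_zero]
  have h_coord := congrFun h_snd j
  simp only [termExponent, hτ, Pi.sub_apply, Pi.add_apply, Pi.single_eq_same,
    Pi.single_eq_of_ne hjk] at h_coord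
  omega

variable [Fintype T] {c : T → ℂ} {A : Matrix ι ι ℂ}

lemma IsBalancedWeight.rotationExpansion_weightPart_apply (hh : IsBalancedWeight σ e h)
    (p : ℤ → Prop) [DecidablePred p] (κ : (ι → ℤ) × (ι → ℤ)) :
    rotationExpansion σ c e (weightPart h p A) κ =
      if p (h ⬝ᵥ κ.1 + h ⬝ᵥ κ.2) then rotationExpansion σ c e A κ else 0 := by
  have h_term (τ : T) (j k : ι) (hκ : termExponent σ e τ j k = κ) :
      h ⬝ᵥ κ.1 + h ⬝ᵥ κ.2 = h k - h j := hκ ▸ hh.dotProduct_termExponent_add τ j k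
  simp only [rotationExpansion_apply, weightPart, Matrix.of_apply]
  split_ifs with hp
  · refine Finset.sum_congr rfl fun j _ => Finset.sum_congr rfl fun k _ =>
      Finset.sum_congr rfl fun τ _ => if_ctx_congr Iff.rfl (fun hκ => ?_) fun _ => rfl
    rw [if_pos (h_term τ j k hκ ▸ hp)]
  · refine Finset.sum_eq_zero fun j _ => Finset.sum_eq_zero fun k _ =>
      Finset.sum_eq_zero fun τ _ => ite_eq_right_iff.mpr fun hκ => ?_
    rw [if_neg (h_term τ j k hκ ▸ hp), zero_mul]

lemma IsBalancedWeight.rotationExpansion_termExponent (hh : IsBalancedWeight σ e h)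
    (h_inj : Function.Injective fun τ => h ⬝ᵥ (Nat.cast ∘ e τ)) {j k : ι} (hjk : j ≠ k) (τ : T) :
    rotationExpansion σ c e A (termExponent σ e τ j k) =
      A j k * (e τ j * (c τ * (starRingEnd ℂ) (c (σ τ)))) := by
  have h_iff (τ' : T) (j' k' : ι) :
      termExponent σ e τ' j' k' = termExponent σ e τ j k ↔ j' = j ∧ k' = k ∧ τ' = τ := by
    refine ⟨fun heq => ?_, by rintro ⟨rfl, rfl, rfl⟩; rfl⟩
    obtain ⟨hτ, hj, hk⟩ := hh.eq_of_termExponent_eq h_inj hjk heq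
    exact ⟨hj, hk, hτ⟩
  classical
  simp only [rotationExpansion_apply, h_iff]
  simp [ite_and]

lemma rotationExpansion_swap_termExponent
    (h_inj : Function.Injective fun τ => h ⬝ᵥ (Nat.cast ∘ e τ)) {j k : ι} (hjk : j ≠ k)
    (hhjk : h j = h k) (τ : T) :
    rotationExpansion σ c e A (termExponent σ e τ j k).swap = 0 := by
  simp only [rotationExpansion_apply, termExponent_ne_swap h_inj hjk hhjk, if_false,
    Finset.sum_const_zero]

end Weights

section Splitting

variable {ι T : Type*} [Fintype ι] [Fintype T] {σ : T → T} {c : T → ℂ} {e : T → ι →₀ ℕ}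
  {h : ι → ℤ} {A : Matrix ι ι ℂ}

lemma IsPairedRotation.weightPart (hA : IsPairedRotation σ (fun τ => monomial (e τ) (c τ)) A)
    (hh : IsBalancedWeight σ e h) (p : ℤ → Prop) [DecidablePred p] :
    IsPairedRotation σ (fun τ => monomial (e τ) (c τ)) (weightPart h p A) := by
  classical
  rw [isPairedRotation_monomial_iff] at hA ⊢
  intro κ
  simp only [hh.rotationExpansion_weightPart_apply, Prod.fst_swap, Prod.snd_swap,
    add_comm (h ⬝ᵥ κ.2)]
  split_ifs
  · exact hA κ
  · simp

lemma IsPairedRotation.apply_eq_zero_of_weight_eq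
    (hA : IsPairedRotation σ (fun τ => monomial (e τ) (c τ)) A) (hc : ∀ τ, c τ ≠ 0)
    (hh : IsBalancedWeight σ e h) (h_inj : Function.Injective fun τ => h ⬝ᵥ (Nat.cast ∘ e τ))
    {j k : ι} (hj : ∃ τ, e τ j ≠ 0) (hjk : j ≠ k) (hhjk : h j = h k) : A j k = 0 := by
  classical
  obtain ⟨τ, hτ⟩ := hj
  have h_coeff := (isPairedRotation_monomial_iff σ c e A).mp hA (termExponent σ e τ j k)
  rw [hh.rotationExpansion_termExponent h_inj hjk,
    rotationExpansion_swap_termExponent h_inj hjk hhjk, map_zero, add_zero] at h_coeff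
  simpa [hτ, hc] using h_coeff

end Splitting

theorem stmt9_general {ι T : Type*} [Fintype ι] [DecidableEq ι] [Fintype T] {σ : T → T}
    {c : T → ℂ} (hc : ∀ τ, c τ ≠ 0) {e : T → ι →₀ ℕ} (he : ∀ j, ∃ τ, e τ j ≠ 0) {h : ι → ℤ}
    (hh : IsBalancedWeight σ e h) (h_inj : Function.Injective fun τ => h ⬝ᵥ (Nat.cast ∘ e τ))
    {A : Matrix ι ι ℂ} (hA : IsPairedRotation σ (fun τ => monomial (e τ) (c τ)) A) :
    IsPairedRotation σ (fun τ => monomial (e τ) (c τ)) (Matrix.diagonal fun j => A j j) ∧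
    IsPairedRotation σ (fun τ => monomial (e τ) (c τ)) (A - Matrix.diagonal fun j => A j j) ∧
    ∃ J₁ : Finset (ι × ι), (∀ p ∈ J₁, p.1 ≠ p.2) ∧
      IsNilpotent (Matrix.of fun j k => if (j, k) ∈ J₁ then A j k else 0) ∧
      IsPairedRotation σ (fun τ => monomial (e τ) (c τ))
        (Matrix.of fun j k => if (j, k) ∈ J₁ then A j k else 0) ∧
      IsNilpotent (Matrix.of fun j k => if j ≠ k ∧ (j, k) ∉ J₁ then A j k else 0) ∧
      IsPairedRotation σ (fun τ => monomial (e τ) (c τ))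
        (Matrix.of fun j k => if j ≠ k ∧ (j, k) ∉ J₁ then A j k else 0) ∧
      A - Matrix.diagonal (fun j => A j j) =
        (Matrix.of fun j k => if (j, k) ∈ J₁ then A j k else 0) +
          Matrix.of fun j k => if j ≠ k ∧ (j, k) ∉ J₁ then A j k else 0 := by
  have h_zero (j k : ι) (hjk : j ≠ k) (hhjk : h j = h k) : A j k = 0 :=
    hA.apply_eq_zero_of_weight_eq hc hh h_inj (he j) hjk hhjk
  have h_diag : (Matrix.diagonal fun j => A j j) = weightPart h (· = 0) A := by
    ext j k
    simp only [weightPart, Matrix.diagonal_apply, Matrix.of_apply]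
    grind
  have h_off : A - Matrix.diagonal (fun j => A j j) = weightPart h (· ≠ 0) A := by
    ext j k
    simp only [weightPart, Matrix.diagonal_apply, Matrix.of_apply, Matrix.sub_apply]
    grind
  let J₁ : Finset (ι × ι) := {p | h p.1 < h p.2}
  have hJ₁ (j k : ι) : (j, k) ∈ J₁ ↔ h j < h k := by simp [J₁]
  have h_pos : (Matrix.of fun j k => if (j, k) ∈ J₁ then A j k else 0) =
      weightPart h (0 < ·) A := by
    ext j k
    simp [weightPart, hJ₁]
  have h_neg : (Matrix.of fun j k => if j ≠ k ∧ (j, k) ∉ J₁ then A j k else 0) =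
      weightPart h (· < 0) A := by
    ext j k
    simp only [weightPart, hJ₁, Matrix.of_apply]
    grind
  refine ⟨h_diag ▸ hA.weightPart hh _, h_off ▸ hA.weightPart hh _, J₁, ?_, ?_⟩
  · exact fun p hp hjk => ((hJ₁ p.1 p.2).mp hp).ne (congrArg h hjk)
  · rw [h_off, h_pos, h_neg]
    exact ⟨isNilpotent_weightPart_pos, hA.weightPart hh _, isNilpotent_weightPart_neg,
      hA.weightPart hh _, weightPart_pos_add_weightPart_neg.symm⟩

/-- For a holomorphically nondegenerate monomial model, any
rotation `X = Σ a_{jk} z_k ∂/∂z_j` splits as `X = D + N` where `D` (the diagonal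
part) and `N` (the off-diagonal part) are rotations, and `N` is nilpotent or a sum
`N = N₁ + N₂` of two nilpotent rotations supported on complementary sets of
off-diagonal indices. -/
theorem stmt9 (cP cQ cR : ℂ) (hcP : cP ≠ 0) (hcQ : cQ ≠ 0) (hcR : cR ≠ 0)
    (a b g : Fin 3 → ℕ)
    (hdeg : degE a + degE b = 2 * degE g)
    (hdet : edet a b g ≠ 0)
    (A : Matrix (Fin 3) (Fin 3) ℂ)
    (hA : IsRotation (mon cP a) (mon cQ b) (mon cR g) A) :
    IsRotation (mon cP a) (mon cQ b) (mon cR g) (Matrix.diagonal fun j => A j j) ∧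
    IsRotation (mon cP a) (mon cQ b) (mon cR g) (A - Matrix.diagonal fun j => A j j) ∧
    (IsNilpotent (A - Matrix.diagonal fun j => A j j) ∨
      ∃ J₁ : Finset (Fin 3 × Fin 3), (∀ p ∈ J₁, p.1 ≠ p.2) ∧
        IsNilpotent (Matrix.of fun j k => if (j, k) ∈ J₁ then A j k else 0) ∧
        IsRotation (mon cP a) (mon cQ b) (mon cR g)
          (Matrix.of fun j k => if (j, k) ∈ J₁ then A j k else 0) ∧
        IsNilpotent (Matrix.of fun j k => if j ≠ k ∧ (j, k) ∉ J₁ then A j k else 0) ∧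
        IsRotation (mon cP a) (mon cQ b) (mon cR g)
          (Matrix.of fun j k => if j ≠ k ∧ (j, k) ∉ J₁ then A j k else 0) ∧
        A - Matrix.diagonal (fun j => A j j) =
          (Matrix.of fun j k => if (j, k) ∈ J₁ then A j k else 0) +
            Matrix.of fun j k => if j ≠ k ∧ (j, k) ∉ J₁ then A j k else 0) := by
  obtain ⟨h, hh, h_inj⟩ := exists_isBalancedWeight_of_edet_ne_zero hdet
  simp only [isRotation_mon_iff] at hA ⊢
  have h_split := stmt9_general (by simp [Fin.forall_fin_succ, hcP, hcQ, hcR])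
    (exists_apply_ne_zero_of_edet_ne_zero hdet) hh h_inj hA
  exact ⟨h_split.1, h_split.2.1, Or.inr h_split.2.2⟩
end
end
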